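/- Under the standing hypotheses, the map F(s,t) = r(s) + t·e(s) is singular at (s₀, t₀) — that is, the vectors (∂F/∂s)(s₀,t₀) and (∂F/∂t)(s₀,t₀) are linearly dependent — if and only if κ₁(s₀) = 0 and t₀ = −⟪r'(s₀), e'(s₀)⟫. Moreover, in that case the singular value is F(s₀, t₀) = σ(s₀), the corresponding point of the striction curve. -/

import Mathlib

noncomputable section
open scoped RealInnerProductSpace

/-- Euclidean 3-space `ℝ³`. -/
abbrev E3 : Type := EuclideanSpace ℝ (Fin 3)

/-- The cross product on `E3`. -/
def cross (u v : E3) : E3 :=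
  (WithLp.equiv 2 (Fin 3 → ℝ)).symm
    ![u 1 * v 2 - u 2 * v 1, u 2 * v 0 - u 0 * v 2, u 0 * v 1 - u 1 * v 0]

/-- Determinant of the 3×3 matrix with columns `u`, `v`, `w`. -/
def det3 (u v w : E3) : ℝ :=
  Matrix.det !![u 0, v 0, w 0; u 1, v 1, w 1; u 2, v 2, w 2]

namespace Ruled

/-- The director curve `e = v₀`. -/
def e (v₀ : ℝ → E3) : ℝ → E3 := v₀

/-- The base curve `r = v₀ × v₁`. -/
def r (v₀ v₁ : ℝ → E3) : ℝ → E3 := fun s => cross (v₀ s) (v₁ s)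

/-- The parametrization `F(s,t) = r(s) + t • e(s)` of the ruled surface. -/
def F (v₀ v₁ : ℝ → E3) (s t : ℝ) : E3 := r v₀ v₁ s + t • v₀ s

/-- `n₀ = v₀'`. -/
def n₀ (v₀ : ℝ → E3) : ℝ → E3 := fun s => deriv v₀ s

/-- `κ₁ = ⟪v₀', v₁'⟫`, the ε-part of the dual curvature. -/
def κ₁ (v₀ v₁ : ℝ → E3) : ℝ → ℝ := fun s => ⟪deriv v₀ s, deriv v₁ s⟫

/-- `n₁ = v₁' - κ₁ • v₀'`. -/
def n₁ (v₀ v₁ : ℝ → E3) : ℝ → E3 := fun s => deriv v₁ s - κ₁ v₀ v₁ s • deriv v₀ s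

/-- `t₀ = v₀ × n₀`. -/
def t₀ (v₀ : ℝ → E3) : ℝ → E3 := fun s => cross (v₀ s) (n₀ v₀ s)

/-- `t₁ = v₀ × n₁ + v₁ × n₀`. -/
def t₁ (v₀ v₁ : ℝ → E3) : ℝ → E3 :=
  fun s => cross (v₀ s) (n₁ v₀ v₁ s) + cross (v₁ s) (n₀ v₀ s)

/-- `τ₀ = ⟪n₀', t₀⟫`, the real part of the dual torsion. -/
def τ₀ (v₀ : ℝ → E3) : ℝ → ℝ := fun s => ⟪deriv (n₀ v₀) s, t₀ v₀ s⟫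

/-- `τ₁ = ⟪n₀', t₁⟫ + ⟪n₁', t₀⟫`, the ε-part of the dual torsion. -/
def τ₁ (v₀ v₁ : ℝ → E3) : ℝ → ℝ :=
  fun s => ⟪deriv (n₀ v₀) s, t₁ v₀ v₁ s⟫ + ⟪deriv (n₁ v₀ v₁) s, t₀ v₀ s⟫

/-- The striction curve `σ(s) = r(s) - ⟪r'(s), e'(s)⟫ • e(s)`. -/
def strict (v₀ v₁ : ℝ → E3) : ℝ → E3 :=
  fun s => r v₀ v₁ s - ⟪deriv (r v₀ v₁) s, deriv (e v₀) s⟫ • e v₀ s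

end Ruled

open Ruled


lemma inner3 (x y : E3) : ⟪x, y⟫ = x 0 * y 0 + x 1 * y 1 + x 2 * y 2 := by
  simp [PiLp.inner_apply, Fin.sum_univ_three, mul_comm]

lemma cross_c0 (u v : E3) : cross u v 0 = u 1 * v 2 - u 2 * v 1 := rfl
lemma cross_c1 (u v : E3) : cross u v 1 = u 2 * v 0 - u 0 * v 2 := rfl
lemma cross_c2 (u v : E3) : cross u v 2 = u 0 * v 1 - u 1 * v 0 := rfl

lemma hasDerivAt_euc {f : ℝ → E3} {f' : E3} {s : ℝ} :
    HasDerivAt f f' s ↔ ∀ i, HasDerivAt (fun u => f u i) (f' i) s := by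
  constructor
  · intro h i
    exact (EuclideanSpace.proj (𝕜 := ℝ) i).hasFDerivAt.comp_hasDerivAt s h
  · intro h
    have h2 : HasDerivAt (fun u => (fun i => f u i)) (fun i => f' i) s := hasDerivAt_pi.2 h
    exact (EuclideanSpace.equiv (Fin 3) ℝ).symm.toContinuousLinearMap.hasFDerivAt.comp_hasDerivAt s h2

lemma hasDerivAt_coord {f : ℝ → E3} {f' : E3} {s : ℝ} (h : HasDerivAt f f' s) (i : Fin 3) :
    HasDerivAt (fun u => f u i) (f' i) s :=
  (hasDerivAt_euc.1 h) i

lemma hasDerivAt_cross {f g : ℝ → E3} {f' g' : E3} {s : ℝ} (hf : HasDerivAt f f' s)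
    (hg : HasDerivAt g g' s) :
    HasDerivAt (fun u => cross (f u) (g u)) (cross f' (g s) + cross (f s) g') s := by
  have F := hasDerivAt_coord hf
  have G := hasDerivAt_coord hg
  refine hasDerivAt_euc.2 fun i => ?_
  fin_cases i
  · refine (((F 1).mul (G 2)).sub ((F 2).mul (G 1))).congr_deriv ?_
    simp [cross_c0]; ring
  · refine (((F 2).mul (G 0)).sub ((F 0).mul (G 2))).congr_deriv ?_
    simp [cross_c1]; ring
  · refine (((F 0).mul (G 1)).sub ((F 1).mul (G 0))).congr_deriv ?_
    simp [cross_c2]; ring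

lemma inner_key (a n p b : E3) (haa : ⟪a, a⟫ = 1) (han : ⟪a, n⟫ = 0) (hap : ⟪a, p⟫ = 0) (c : ℝ) :
    ⟪cross n p + cross a b + c • n, cross a n⟫ = ⟪n, b⟫ := by
  simp only [inner3, cross_c0, cross_c1, cross_c2, PiLp.add_apply, PiLp.smul_apply,
    smul_eq_mul] at *
  linear_combination (n 0 * b 0 + n 1 * b 1 + n 2 * b 2) * haa
    + ((p 0 * n 0 + p 1 * n 1 + p 2 * n 2) - (a 0 * b 0 + a 1 * b 1 + a 2 * b 2)) * han
    - (n 0 * n 0 + n 1 * n 1 + n 2 * n 2) * hap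

lemma inner_cross_self (a n : E3) : ⟪a, cross a n⟫ = 0 := by
  simp only [inner3, cross_c0, cross_c1, cross_c2]; ring

lemma zero_of_orth (a n x : E3) (haa : ⟪a, a⟫ = 1) (hnn : ⟪n, n⟫ = 1) (han : ⟪a, n⟫ = 0)
    (h1 : ⟪x, a⟫ = 0) (h2 : ⟪x, n⟫ = 0) (h3 : ⟪x, cross a n⟫ = 0) : x = 0 := by
  have hd : ⟪cross a n, cross a n⟫ = 1 := by
    simp only [inner3, cross_c0, cross_c1, cross_c2] at *
    linear_combination (n 0 * n 0 + n 1 * n 1 + n 2 * n 2) * haa + hnn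
      - (a 0 * n 0 + a 1 * n 1 + a 2 * n 2) * han
  have key : ∀ i, x i * ⟪cross a n, cross a n⟫ = ⟪x, cross a n⟫ * cross a n i
      + ⟪x, a⟫ * cross n (cross a n) i + ⟪x, n⟫ * cross (cross a n) a i := by
    intro i
    simp only [inner3]
    fin_cases i <;> simp [cross_c0, cross_c1, cross_c2] <;> ring
  ext i
  have := key i
  rw [hd, h1, h2, h3] at this
  simpa using this

/-- `F` is singular at `(s₀, c)` (the partial derivatives are linearly dependent) iff
`κ₁(s₀) = 0` and `c = -⟪r'(s₀), e'(s₀)⟫`; moreover in that case the singular value is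
the striction point `σ(s₀)`. -/
theorem singular_point_characterization
    (I : Set ℝ) (v₀ v₁ : ℝ → E3)
    (hI : IsOpen I) (hI' : I.OrdConnected)
    (hv₀ : ContDiffOn ℝ (⊤ : ℕ∞) v₀ I) (hv₁ : ContDiffOn ℝ (⊤ : ℕ∞) v₁ I)
    (hunit : ∀ s ∈ I, ‖v₀ s‖ = 1) (horth : ∀ s ∈ I, ⟪v₀ s, v₁ s⟫ = 0)
    (harc : ∀ s ∈ I, ‖deriv v₀ s‖ = 1) :
    ∀ s₀ ∈ I, ∀ c : ℝ,
      (¬ LinearIndependent ℝ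
          ![deriv (fun u => F v₀ v₁ u c) s₀, deriv (fun u => F v₀ v₁ s₀ u) c] ↔
        (κ₁ v₀ v₁ s₀ = 0 ∧ c = -⟪deriv (r v₀ v₁) s₀, deriv (e v₀) s₀⟫)) ∧
      ((κ₁ v₀ v₁ s₀ = 0 ∧ c = -⟪deriv (r v₀ v₁) s₀, deriv (e v₀) s₀⟫) →
        F v₀ v₁ s₀ c = strict v₀ v₁ s₀) := by
  intro s hs c
  have hnhds : I ∈ nhds s := hI.mem_nhds hs
  have d0 : HasDerivAt v₀ (deriv v₀ s) s :=
    ((hv₀.contDiffAt hnhds).differentiableAt (by simp)).hasDerivAt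
  have d1 : HasDerivAt v₁ (deriv v₁ s) s :=
    ((hv₁.contDiffAt hnhds).differentiableAt (by simp)).hasDerivAt
  have dr : HasDerivAt (r v₀ v₁) (cross (deriv v₀ s) (v₁ s) + cross (v₀ s) (deriv v₁ s)) s :=
    hasDerivAt_cross d0 d1
  have dFs : HasDerivAt (fun u => F v₀ v₁ u c)
      (cross (deriv v₀ s) (v₁ s) + cross (v₀ s) (deriv v₁ s) + c • deriv v₀ s) s :=
    dr.add (d0.const_smul c)
  have dFt : HasDerivAt (fun u => F v₀ v₁ s u) (v₀ s) c := by
    exact (((hasDerivAt_id c).smul_const (v₀ s)).const_add (r v₀ v₁ s)).congr_deriv (one_smul _ _)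
  have haa : ⟪v₀ s, v₀ s⟫ = 1 := by rw [real_inner_self_eq_norm_sq, hunit s hs]; norm_num
  have hnn : ⟪deriv v₀ s, deriv v₀ s⟫ = 1 := by
    rw [real_inner_self_eq_norm_sq, harc s hs]; norm_num
  have han : ⟪v₀ s, deriv v₀ s⟫ = 0 := by
    have h1 := d0.inner ℝ d0
    have h2 : HasDerivAt (fun u => ⟪v₀ u, v₀ u⟫) 0 s := by
      refine (hasDerivAt_const s (1 : ℝ)).congr_of_eventuallyEq ?_
      filter_upwards [hnhds] with u hu
      rw [real_inner_self_eq_norm_sq, hunit u hu]; norm_num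
    have h3 := h1.unique h2
    rw [real_inner_comm (v₀ s) (deriv v₀ s)] at h3
    linarith
  have hk := inner_key (v₀ s) (deriv v₀ s) (v₁ s) (deriv v₁ s) haa han (horth s hs) c
  have hac := inner_cross_self (v₀ s) (deriv v₀ s)
  have ha0 : v₀ s ≠ 0 := by
    intro h; rw [h] at haa; simp at haa
  constructor
  · rw [dFs.deriv, dFt.deriv, dr.deriv]
    have hwn : ⟪cross (deriv v₀ s) (v₁ s) + cross (v₀ s) (deriv v₁ s) + c • deriv v₀ s,
        deriv v₀ s⟫ = ⟪cross (deriv v₀ s) (v₁ s) + cross (v₀ s) (deriv v₁ s), deriv v₀ s⟫ + c := by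
      rw [inner_add_left _ (c • deriv v₀ s), real_inner_smul_left, hnn, mul_one]
    change _ ↔ ⟪deriv v₀ s, deriv v₁ s⟫ = 0 ∧
      c = -⟪cross (deriv v₀ s) (v₁ s) + cross (v₀ s) (deriv v₁ s), deriv v₀ s⟫
    rw [← hk]
    generalize cross (deriv v₀ s) (v₁ s) + cross (v₀ s) (deriv v₁ s) = R at *
    generalize R + c • deriv v₀ s = w at *
    rw [LinearIndependent.pair_symm_iff, LinearIndependent.pair_iff' ha0]
    push Not
    constructor
    · rintro ⟨k, rfl⟩
      rw [real_inner_smul_left, han] at hwn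
      rw [real_inner_smul_left, hac]
      constructor <;> linarith
    · rintro ⟨h1, h2⟩
      refine ⟨⟪w, v₀ s⟫, ?_⟩
      have := zero_of_orth (v₀ s) (deriv v₀ s) (w - ⟪w, v₀ s⟫ • v₀ s) haa hnn han
        (by rw [inner_sub_left, real_inner_smul_left, haa]; ring)
        (by rw [inner_sub_left, real_inner_smul_left, han, hwn]; linarith)
        (by rw [inner_sub_left, real_inner_smul_left, hac, h1]; ring)
      exact (sub_eq_zero.1 this).symm
  · rintro ⟨-, h⟩
    rw [F, strict, h, neg_smul, ← sub_eq_add_neg]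
    rfl
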